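/- arXiv:2201.00816 — 4 statements merged into one kernel-verified Lean document; each statement's English description precedes it below -/
import Mathlib

section
/- Let n ≥ 1, T₀ = 1, and A = {(0,0,0), (0,0,1)} ⊆ ℍ^n. Set r₁ = 1/(2√π), R₁ = (r₁/√n, …, r₁/√n) ∈ ℝ^n, r₂ = r₁·√((π+2)/(2π)), and R₂ = (r₂/√n, …, r₂/√n) ∈ ℝ^n. Then, writing points of ℍ^n in complex notation (z,t) with z ∈ ℂ^n: (a) the points p₂ = (R₁, 2(π/2 − 1)r₁²) and q₂ = (R₁, 2(3π/2 + 1)r₁²) belong to G²(A); and (b) the curve σ₂ : [0,2π] → ℍ^n defined by σ₂(s) = (R₁ + (1 − e^{−is})R₂, 2(π/2 − 1)r₁² + 2(s − sin s)r₂² − 2(sin s)⟨R₁,R₂⟩), where ⟨·,·⟩ is the Euclidean inner product on ℝ^n, is a geodesic connecting p₂ to q₂. -/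
open MeasureTheory Set Real
open scoped ENNReal NNReal

noncomputable section

/-- Points of the Heisenberg group `ℍⁿ`, written `(x, y, t)` with `x, y ∈ ℝⁿ`, `t ∈ ℝ`. -/
abbrev Hpt (n : ℕ) : Type := (Fin n → ℝ) × (Fin n → ℝ) × ℝ

/-- The projection of a point of `ℍⁿ` onto the horizontal `z = (x,y)` plane, viewed as a
point of the Euclidean space `ℝ^{2n}` (so that lengths are Euclidean lengths). -/
def hproj {n : ℕ} (p : Hpt n) : EuclideanSpace ℝ (Fin n ⊕ Fin n) :=
  (WithLp.equiv 2 ((Fin n ⊕ Fin n) → ℝ)).symm (Sum.elim p.1 p.2.1)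

/-- A curve `γ` is a horizontal curve on `[a,b]` if it is (absolutely continuous, here:
Lipschitz) and almost everywhere it has a derivative `γ' = (x', y', t')` satisfying the
horizontality condition `t' = 2 ∑ⱼ (xⱼ' yⱼ - yⱼ' xⱼ)`. -/
def IsHorizontal {n : ℕ} (γ : ℝ → Hpt n) (a b : ℝ) : Prop :=
  a ≤ b ∧ (∃ K : NNReal, LipschitzOnWith K γ (Icc a b)) ∧
    ∃ γ' : ℝ → Hpt n,
      (∀ᵐ s ∂(volume.restrict (Icc a b)), HasDerivAt γ (γ' s) s) ∧
      (∀ᵐ s ∂(volume.restrict (Icc a b)),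
        (γ' s).2.2 = 2 * ∑ j, ((γ' s).1 j * (γ s).2.1 j - (γ' s).2.1 j * (γ s).1 j))

/-- The length of a horizontal curve on `[a,b]`: the Euclidean length (total variation)
of its projection to the `z`-plane `ℝ^{2n}`. -/
def hLength {n : ℕ} (γ : ℝ → Hpt n) (a b : ℝ) : ℝ≥0∞ :=
  eVariationOn (fun s => hproj (γ s)) (Icc a b)

/-- The Carnot–Carathéodory distance: the infimum of lengths of horizontal curves
joining `p` to `q`. -/
def ccDist {n : ℕ} (p q : Hpt n) : ℝ≥0∞ :=
  ⨅ (γ : ℝ → Hpt n) (a : ℝ) (b : ℝ) (_ : IsHorizontal γ a b)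
    (_ : γ a = p) (_ : γ b = q), hLength γ a b

/-- `γ` is a geodesic on `[a,b]`: a horizontal curve whose length equals the
Carnot–Carathéodory distance between its endpoints. -/
def IsGeodesicOn {n : ℕ} (γ : ℝ → Hpt n) (a b : ℝ) : Prop :=
  IsHorizontal γ a b ∧ hLength γ a b = ccDist (γ a) (γ b)

/-- A set `A ⊆ ℍⁿ` is geodetically convex if every geodesic connecting any two points of
`A` lies in `A`. -/
def GeodConvexSet {n : ℕ} (A : Set (Hpt n)) : Prop :=
  ∀ p ∈ A, ∀ q ∈ A, ∀ (γ : ℝ → Hpt n) (a b : ℝ),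
    IsGeodesicOn γ a b → γ a = p → γ b = q → ∀ s ∈ Icc a b, γ s ∈ A

/-- A function `u : ℍⁿ → ℝ` is geodetically convex if its composition with every geodesic
is convex. -/
def GeodConvexFun {n : ℕ} (u : Hpt n → ℝ) : Prop :=
  ∀ (γ : ℝ → Hpt n) (a b : ℝ), IsGeodesicOn γ a b → ConvexOn ℝ (Icc a b) (u ∘ γ)

/-- The union of the images of all geodesics connecting pairs of points of `S`. -/
def geodJoin {n : ℕ} (S : Set (Hpt n)) : Set (Hpt n) :=
  {z | ∃ p ∈ S, ∃ q ∈ S, ∃ (γ : ℝ → Hpt n) (a b : ℝ),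
    IsGeodesicOn γ a b ∧ γ a = p ∧ γ b = q ∧ z ∈ γ '' Icc a b}

/-- The iterated geodesic hulls `G^m(A)`, with `G^0(A) = A`. -/
def Gm {n : ℕ} (A : Set (Hpt n)) : ℕ → Set (Hpt n)
  | 0 => A
  | (m + 1) => geodJoin (Gm A m)

/-! Along a horizontal curve the height `t` grows by a multiple of the signed area swept out by the
projection `z` to `ℂⁿ`. For a closed projection of length `ℓ` this gives the isoperimetric
inequality `π Δt ≤ ℓ²`, with equality for circles; hence lifted circles are geodesics, and in
particular `σ₂`, the lift of the circle through `R₁` with centre `R₁ + R₂`. After a translation to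
`z a = 0`, the inequality follows by calibration: if `kℓ < π` and `V` is the arc length, then
`V - k t - k cot (kV + δ) |z|²` is nondecreasing, so `k Δt ≤ ℓ`, and `k` may tend to `π / ℓ`.

With `T₀ = 4πr²`, the circles of radius `r` through the origin of `ℂⁿ` show that the slice of
`G¹(A)` at height `2(τ - sin τ)r²` contains the sphere `|z|² = 2(1 - cos τ)r²`. At this height,
segments joining antipodal points of the sphere are horizontal, so `G²(A)` contains the punctured
ball bounded by it. The points `p₂` and `q₂` lie in these balls for `τ = π/2` and `τ = 3π/2`. -/

open Filter Topology
open scoped RealInnerProductSpace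

section Variation

variable {E : Type*} {f : ℝ → E} {S : Set ℝ} {a s t : ℝ} {K : ℝ≥0}

theorem eVariationOn_Icc_le_of_lipschitzOnWith [PseudoEMetricSpace E]
    (hf : LipschitzOnWith K f S) :
    eVariationOn f (S ∩ Icc s t) ≤ K * ENNReal.ofReal (t - s) := by
  rw [← eVariationOn_id_Icc]
  calc eVariationOn f (S ∩ Icc s t)
      ≤ K * eVariationOn id (S ∩ Icc s t) :=
        (hf.mono inter_subset_left).comp_eVariationOn_le (mapsTo_id _)
    _ ≤ K * eVariationOn id (Icc s t) := by
        gcongr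
        exact eVariationOn.mono _ inter_subset_right

theorem lipschitzOnWith_variationOnFromTo [PseudoEMetricSpace E]
    (hf : LipschitzOnWith K f S) (ha : a ∈ S) :
    LipschitzOnWith K (variationOnFromTo f S a) S := by
  refine LipschitzOnWith.of_le_add_mul K fun s hs t ht ↦ ?_
  rw [← sub_le_iff_le_add', variationOnFromTo.sub_right hf.locallyBoundedVariationOn ha hs ht]
  rcases le_total s t with hst | hts
  · exact (variationOnFromTo.nonpos_of_ge f S hst).trans (by positivity)
  · rw [variationOnFromTo.eq_of_le f S hts, Real.dist_eq, abs_of_nonneg (sub_nonneg.2 hts)]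
    refine ENNReal.toReal_le_of_le_ofReal (by positivity) ?_
    rw [ENNReal.ofReal_mul K.coe_nonneg, ENNReal.ofReal_coe_nnreal]
    exact eVariationOn_Icc_le_of_lipschitzOnWith hf

theorem dist_le_variationOnFromTo [PseudoMetricSpace E] (hf : LocallyBoundedVariationOn f S)
    (hs : s ∈ S) (ht : t ∈ S) (hst : s ≤ t) : dist (f s) (f t) ≤ variationOnFromTo f S s t := by
  rw [variationOnFromTo.eq_of_le f S hst, dist_edist]
  exact ENNReal.toReal_mono (hf s t hs ht)
    (eVariationOn.edist_le f ⟨hs, left_mem_Icc.2 hst⟩ ⟨ht, right_mem_Icc.2 hst⟩)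

theorem norm_le_deriv_variationOnFromTo [NormedAddCommGroup E] [NormedSpace ℝ E]
    {f' : E} (hf : LocallyBoundedVariationOn f S) (ha : a ∈ S) (hs : S ∈ 𝓝 s)
    (hf' : HasDerivAt f f' s) (hV : DifferentiableAt ℝ (variationOnFromTo f S a) s) :
    ‖f'‖ ≤ deriv (variationOnFromTo f S a) s := by
  refine le_of_tendsto_of_tendsto ((hasDerivWithinAt_iff_tendsto_slope' self_notMem_Ioi).1
      hf'.hasDerivWithinAt).norm ((hasDerivWithinAt_iff_tendsto_slope' self_notMem_Ioi).1
      hV.hasDerivAt.hasDerivWithinAt) ?_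
  filter_upwards [self_mem_nhdsWithin, mem_nhdsWithin_of_mem_nhds hs] with t hst ht
  have hst : s < t := hst
  rw [slope_def_module, slope_def_module, norm_smul, smul_eq_mul, norm_inv, Real.norm_eq_abs,
    abs_of_pos (sub_pos.2 hst), variationOnFromTo.sub_right hf ha ht (mem_of_mem_nhds hs),
    ← dist_eq_norm, dist_comm]
  have : 0 < t - s := sub_pos.2 hst
  gcongr
  exact dist_le_variationOnFromTo hf (mem_of_mem_nhds hs) ht hst.le

theorem le_of_ae_deriv_nonneg {F : ℝ → ℝ} {a b : ℝ} (hab : a ≤ b)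
    (hF : AbsolutelyContinuousOnInterval F a b)
    (hF' : ∀ᵐ s ∂volume.restrict (Icc a b), 0 ≤ deriv F s) : F a ≤ F b := by
  rw [← sub_nonneg, ← hF.integral_deriv_eq_sub]
  exact intervalIntegral.integral_nonneg_of_ae_restrict hab hF'

end Variation

section Cotangent

theorem hasDerivAt_cot {x : ℝ} (hx : sin x ≠ 0) :
    HasDerivAt Real.cot (-(1 + Real.cot x ^ 2)) x := by
  rw [funext Real.cot_eq_cos_div_sin]
  refine ((hasDerivAt_cos x).div (hasDerivAt_sin x) hx).congr_deriv ?_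
  field_simp
  ring

theorem exists_lipschitzOnWith_cot {c d : ℝ} (hc : 0 < c) (hd : d < π) :
    ∃ K, LipschitzOnWith K Real.cot (Icc c d) := by
  have hsin : ∀ x ∈ Icc c d, sin x ≠ 0 := fun x hx ↦
    (sin_pos_of_pos_of_lt_pi (hc.trans_le hx.1) (hx.2.trans_lt hd)).ne'
  have hcot : ContDiffOn ℝ 1 Real.cot (Icc c d) := by
    rw [funext Real.cot_eq_cos_div_sin]
    exact contDiff_cos.contDiffOn.div contDiff_sin.contDiffOn hsin
  exact hcot.exists_lipschitzOnWith one_ne_zero (convex_Icc c d) isCompact_Icc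

end Cotangent

section Calibration

variable {E : Type*} [NormedAddCommGroup E]

/-- The quantity calibrating the isoperimetric inequality along a curve `z` with length function `V`
and height `u`: it is nondecreasing if `u' = 2⟪z', J z⟫`. The phase `δ` keeps the cotangent away
from its poles. -/
def calibration (k δ : ℝ) (V u : ℝ → ℝ) (z : ℝ → E) (s : ℝ) : ℝ :=
  V s - k * u s - k * (Real.cot (k * V s + δ) * ‖z s‖ ^ 2)

theorem absolutelyContinuousOnInterval_calibration {V u : ℝ → ℝ} {z : ℝ → E}
    {a b c d k δ : ℝ} {K L : ℝ≥0} (hab : a ≤ b)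
    (hV : LipschitzOnWith K V (Icc a b)) (hu : AbsolutelyContinuousOnInterval u a b)
    (hz : LipschitzOnWith L z (Icc a b)) (hc : 0 < c) (hd : d < π)
    (hmaps : MapsTo (fun s ↦ k * V s + δ) (Icc a b) (Icc c d)) :
    AbsolutelyContinuousOnInterval (calibration k δ V u z) a b := by
  rw [← uIcc_of_le hab] at hV hz hmaps
  obtain ⟨M, hM⟩ := exists_lipschitzOnWith_cot hc hd
  have hangle : LipschitzOnWith (1 * ‖k‖₊ * K) (fun s ↦ k * V s + δ) (uIcc a b) :=
    ((isometry_add_right δ).lipschitz.comp (lipschitzWith_smul k)).comp_lipschitzOnWith hV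
  have hcot : AbsolutelyContinuousOnInterval (fun s ↦ Real.cot (k * V s + δ)) a b :=
    (hM.comp hangle hmaps).absolutelyContinuousOnInterval
  have hnorm : AbsolutelyContinuousOnInterval (fun s ↦ ‖z s‖) a b :=
    (lipschitzWith_one_norm.comp_lipschitzOnWith hz).absolutelyContinuousOnInterval
  have hsq : AbsolutelyContinuousOnInterval (fun s ↦ ‖z s‖ ^ 2) a b := by
    simpa only [sq] using hnorm.fun_mul hnorm
  exact (hV.absolutelyContinuousOnInterval.sub (hu.const_mul k)).sub
    ((hcot.fun_mul hsq).const_mul k)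

end Calibration

section Isoperimetric

variable {E : Type*} [NormedAddCommGroup E] [InnerProductSpace ℝ E]

theorem two_mul_inner_add_le_of_norm_le {x y v : E} {c k ν : ℝ} (hxy : ⟪x, y⟫ = 0)
    (hy : ‖y‖ ≤ ‖x‖) (hv : ‖v‖ ≤ ν) (hk : 0 ≤ k) :
    2 * k * (⟪v, y⟫ + c * ⟪x, v⟫) ≤ ν * (1 + k ^ 2 * ((1 + c ^ 2) * ‖x‖ ^ 2)) := by
  have hν : 0 ≤ ν := (norm_nonneg v).trans hv
  have hnorm : ‖y + c • x‖ ^ 2 ≤ (1 + c ^ 2) * ‖x‖ ^ 2 := by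
    rw [norm_add_sq_real, inner_smul_right, real_inner_comm, hxy, norm_smul, mul_pow,
      Real.norm_eq_abs, sq_abs]
    nlinarith [norm_nonneg y]
  calc 2 * k * (⟪v, y⟫ + c * ⟪x, v⟫)
      = 2 * k * ⟪v, y + c • x⟫ := by rw [inner_add_right, inner_smul_right, real_inner_comm x v]
    _ ≤ 2 * k * (ν * ‖y + c • x‖) := by
        gcongr
        exact (real_inner_le_norm _ _).trans (by gcongr)
    _ ≤ ν * (1 + k ^ 2 * ‖y + c • x‖ ^ 2) := by
        nlinarith [mul_nonneg hν (sq_nonneg (1 - k * ‖y + c • x‖))]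
    _ ≤ ν * (1 + k ^ 2 * ((1 + c ^ 2) * ‖x‖ ^ 2)) := by gcongr

variable {J : E → E} {V u : ℝ → ℝ} {z z' : ℝ → E} {a b k δ : ℝ} {K : ℝ≥0}

theorem deriv_calibration_nonneg {s ν : ℝ} {w : E} (hJ : ∀ x, ⟪x, J x⟫ = 0)
    (hJ_norm : ∀ x, ‖J x‖ ≤ ‖x‖) (hk : 0 ≤ k) (hsin : sin (k * V s + δ) ≠ 0)
    (hV : HasDerivAt V ν s) (hu : HasDerivAt u (2 * ⟪w, J (z s)⟫) s) (hz : HasDerivAt z w s)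
    (hw : ‖w‖ ≤ ν) : 0 ≤ deriv (calibration k δ V u z) s := by
  have hcot := (hasDerivAt_cot hsin).comp s ((hV.const_mul k).add_const δ)
  have hF : HasDerivAt (calibration k δ V u z) _ s :=
    (hV.sub (hu.const_mul k)).sub ((hcot.mul hz.norm_sq).const_mul k)
  rw [hF.deriv]
  simp only [Function.comp_apply]
  linarith [two_mul_inner_add_le_of_norm_le (c := Real.cot (k * V s + δ)) (hJ (z s))
    (hJ_norm (z s)) hw hk]

theorem mul_sub_le_of_mul_lt_pi (hab : a ≤ b) (hJ : ∀ x, ⟪x, J x⟫ = 0)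
    (hJ_norm : ∀ x, ‖J x‖ ≤ ‖x‖) (hz : LipschitzOnWith K z (Icc a b))
    (hu : AbsolutelyContinuousOnInterval u a b) (hza : z a = 0) (hzb : z b = 0)
    (hz' : ∀ᵐ s ∂volume.restrict (Icc a b), HasDerivAt z (z' s) s)
    (hu' : ∀ᵐ s ∂volume.restrict (Icc a b), HasDerivAt u (2 * ⟪z' s, J (z s)⟫) s)
    (hk : 0 ≤ k) (hkπ : k * (eVariationOn z (Icc a b)).toReal < π) :
    k * (u b - u a) ≤ (eVariationOn z (Icc a b)).toReal := by
  set V := variationOnFromTo z (Icc a b) a with hVdef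
  have ha : a ∈ Icc a b := left_mem_Icc.2 hab
  have hb : b ∈ Icc a b := right_mem_Icc.2 hab
  have hVa : V a = 0 := variationOnFromTo.self _ _ _
  have hVb : V b = (eVariationOn z (Icc a b)).toReal := by
    rw [hVdef, variationOnFromTo.eq_of_le _ _ hab, inter_self]
  have hbv : LocallyBoundedVariationOn z (Icc a b) := hz.locallyBoundedVariationOn
  have hV : LipschitzOnWith K V (Icc a b) := lipschitzOnWith_variationOnFromTo hz ha
  rw [← hVb] at hkπ ⊢
  obtain ⟨δ, hδ, hδπ⟩ : ∃ δ, 0 < δ ∧ k * V b + δ < π :=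
    (exists_between (sub_pos.2 hkπ)).imp fun δ hδ ↦ ⟨hδ.1, by linarith [hδ.2]⟩
  have hmaps : MapsTo (fun s ↦ k * V s + δ) (Icc a b) (Icc δ (k * V b + δ)) := fun s hs ↦ by
    have hVs := variationOnFromTo.nonneg_of_le z (Icc a b) hs.1
    have hVsb := variationOnFromTo.monotoneOn hbv ha hs hb hs.2
    exact ⟨le_add_of_nonneg_left (mul_nonneg hk hVs), by dsimp only; gcongr⟩
  have hV' : ∀ᵐ s ∂volume.restrict (Icc a b), DifferentiableAt ℝ V s := by
    rw [← uIcc_of_le hab] at hV ⊢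
    exact (ae_restrict_iff' measurableSet_uIcc).2
      hV.absolutelyContinuousOnInterval.ae_differentiableAt
  have hinterior : ∀ᵐ s ∂volume.restrict (Icc a b), s ∈ Ioo a b := by
    rw [← restrict_Ioo_eq_restrict_Icc]
    exact ae_restrict_mem measurableSet_Ioo
  have hmono : calibration k δ V u z a ≤ calibration k δ V u z b := by
    refine le_of_ae_deriv_nonneg hab
      (absolutelyContinuousOnInterval_calibration hab hV hu hz hδ hδπ hmaps) ?_
    filter_upwards [hinterior, hV', hz', hu'] with s hs hVs hzs hus
    have hangle := hmaps (Ioo_subset_Icc_self hs)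
    exact deriv_calibration_nonneg hJ hJ_norm hk
      (sin_pos_of_pos_of_lt_pi (hδ.trans_le hangle.1) (hangle.2.trans_lt hδπ)).ne'
      hVs.hasDerivAt hus hzs
      (norm_le_deriv_variationOnFromTo hbv ha (Icc_mem_nhds hs.1 hs.2) hzs hVs)
  simp only [calibration, hza, hzb, hVa, norm_zero] at hmono
  linarith

theorem pi_mul_sub_le_sq_eVariationOn_of_eq_zero (hab : a ≤ b) (hJ : ∀ x, ⟪x, J x⟫ = 0)
    (hJ_norm : ∀ x, ‖J x‖ ≤ ‖x‖) (hz : LipschitzOnWith K z (Icc a b))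
    (hu : AbsolutelyContinuousOnInterval u a b) (hza : z a = 0) (hzb : z b = 0)
    (hz' : ∀ᵐ s ∂volume.restrict (Icc a b), HasDerivAt z (z' s) s)
    (hu' : ∀ᵐ s ∂volume.restrict (Icc a b), HasDerivAt u (2 * ⟪z' s, J (z s)⟫) s) :
    π * (u b - u a) ≤ (eVariationOn z (Icc a b)).toReal ^ 2 := by
  set ℓ := (eVariationOn z (Icc a b)).toReal
  have : 0 ≤ ℓ := ENNReal.toReal_nonneg
  have hbound : ∀ ε > 0, π * (u b - u a) ≤ (ℓ + ε) * ℓ := fun ε hε ↦ by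
    have hk : π / (ℓ + ε) * ℓ < π := by
      rw [div_mul_eq_mul_div, div_lt_iff₀ (by positivity)]
      gcongr
      linarith
    have h := mul_sub_le_of_mul_lt_pi hab hJ hJ_norm hz hu hza hzb hz' hu' (by positivity) hk
    rwa [div_mul_eq_mul_div, div_le_iff₀' (by positivity)] at h
  have hlim : Tendsto (fun ε ↦ (ℓ + ε) * ℓ) (𝓝[>] 0) (𝓝 ((ℓ + 0) * ℓ)) :=
    ((by fun_prop : Continuous fun ε ↦ (ℓ + ε) * ℓ).tendsto 0).mono_left nhdsWithin_le_nhds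
  rw [add_zero, ← sq] at hlim
  exact ge_of_tendsto hlim (eventually_mem_nhdsWithin.mono hbound)

theorem pi_mul_sub_le_sq_eVariationOn {J : E →ₗ[ℝ] E} (hab : a ≤ b) (hJ : ∀ x, ⟪x, J x⟫ = 0)
    (hJ_norm : ∀ x, ‖J x‖ ≤ ‖x‖) (hz : LipschitzOnWith K z (Icc a b))
    (hu : AbsolutelyContinuousOnInterval u a b) (hclosed : z a = z b)
    (hz' : ∀ᵐ s ∂volume.restrict (Icc a b), HasDerivAt z (z' s) s)
    (hu' : ∀ᵐ s ∂volume.restrict (Icc a b), HasDerivAt u (2 * ⟪z' s, J (z s)⟫) s) :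
    π * (u b - u a) ≤ (eVariationOn z (Icc a b)).toReal ^ 2 := by
  have hvar : eVariationOn (fun s ↦ z s - z a) (Icc a b) = eVariationOn z (Icc a b) := by
    simp only [eVariationOn, edist_sub_right]
  have hz₀ : LipschitzOnWith K (fun s ↦ z s - z a) (Icc a b) := fun s hs t ht ↦ by
    simpa only [edist_sub_right] using hz hs ht
  have hinner : AbsolutelyContinuousOnInterval (fun s ↦ 2 * ⟪J (z a), z s⟫) a b := by
    rw [← uIcc_of_le hab] at hz
    have hlip := (innerSL ℝ (J (z a))).lipschitz.comp_lipschitzOnWith hz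
    exact hlip.absolutelyContinuousOnInterval.const_mul 2
  have h := pi_mul_sub_le_sq_eVariationOn_of_eq_zero (z' := z')
    (u := fun s ↦ u s - 2 * ⟪J (z a), z s⟫) hab hJ hJ_norm hz₀ (hu.sub hinner) (sub_self _)
    (by rw [hclosed, sub_self]) (hz'.mono fun s hs ↦ hs.sub_const _) (by
      filter_upwards [hz', hu'] with s hzs hus
      refine (hus.sub (((innerSL ℝ (J (z a))).hasFDerivAt.comp_hasDerivAt s hzs).const_mul
        2)).congr_deriv ?_
      rw [innerSL_apply_apply, map_sub, inner_sub_right, real_inner_comm (J (z a)), mul_sub])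
  rwa [hvar, hclosed, sub_sub_sub_cancel_right] at h

end Isoperimetric

section HorizontalPlane

variable {n : ℕ}

/-- The plane `ℝ^{2n} = ℂⁿ` onto which `hproj` projects; its coordinates `Sum.inl j`, `Sum.inr j`
are `xⱼ`, `yⱼ`. -/
abbrev HPlane (n : ℕ) : Type := EuclideanSpace ℝ (Fin n ⊕ Fin n)

/-- The splitting of `ℍⁿ`, as a vector space, into the horizontal plane and the `t`-axis. -/
def hsplit (n : ℕ) : Hpt n ≃L[ℝ] HPlane n × ℝ :=
  LinearEquiv.toContinuousLinearEquiv
    { toFun := fun p ↦ (hproj p, p.2.2)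
      invFun := fun q ↦ (fun j ↦ q.1 (Sum.inl j), fun j ↦ q.1 (Sum.inr j), q.2)
      map_add' := fun p q ↦ by
        refine Prod.ext (PiLp.ext fun i ↦ ?_) rfl
        cases i <;> rfl
      map_smul' := fun c p ↦ by
        refine Prod.ext (PiLp.ext fun i ↦ ?_) rfl
        cases i <;> rfl
      left_inv := fun _ ↦ rfl
      right_inv := fun q ↦ by
        refine Prod.ext (PiLp.ext fun i ↦ ?_) rfl
        cases i <;> rfl }

/-- The point of `ℍⁿ` at height `t` above the point `z` of the horizontal plane. -/
def hlift (z : HPlane n) (t : ℝ) : Hpt n := (hsplit n).symm (z, t)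

@[simp]
theorem hproj_hlift (z : HPlane n) (t : ℝ) : hproj (hlift z t) = z :=
  congrArg Prod.fst ((hsplit n).apply_symm_apply (z, t))

theorem norm_sq_hproj (p : Hpt n) : ‖hproj p‖ ^ 2 = ∑ i, p.1 i ^ 2 + ∑ i, p.2.1 i ^ 2 := by
  simp [EuclideanSpace.real_norm_sq_eq, Fintype.sum_sum_type, hproj]

/-- The hrotation `(x, y) ↦ (y, -x)`, that is, multiplication by `-i` on `ℂⁿ`. -/
def hrotation (n : ℕ) : HPlane n →ₗᵢ[ℝ] HPlane n where
  toFun z := WithLp.toLp 2 (Sum.elim (fun j ↦ z (Sum.inr j)) fun j ↦ -z (Sum.inl j))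
  map_add' z w := by
    ext i
    cases i <;> simp [add_comm]
  map_smul' c z := by
    ext i
    cases i <;> simp
  norm_map' z := by simp [EuclideanSpace.norm_eq, Fintype.sum_sum_type, add_comm]

theorem inner_hrotation (w z : HPlane n) :
    ⟪w, hrotation n z⟫ =
      ∑ j, (w (Sum.inl j) * z (Sum.inr j) - w (Sum.inr j) * z (Sum.inl j)) := by
  simp [PiLp.inner_apply, hrotation, Fintype.sum_sum_type, Finset.sum_add_distrib, mul_comm,
    sub_eq_add_neg]

@[simp]
theorem inner_self_hrotation (z : HPlane n) : ⟪z, hrotation n z⟫ = 0 := by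
  simp [inner_hrotation, mul_comm]

@[simp]
theorem inner_hrotation_self (z : HPlane n) : ⟪hrotation n z, z⟫ = 0 := by
  rw [real_inner_comm, inner_self_hrotation]

@[simp]
theorem hrotation_hrotation (z : HPlane n) : hrotation n (hrotation n z) = -z := by
  ext i
  cases i <;> simp [hrotation]

theorem norm_smul_add_smul_hrotation_sq (a b : ℝ) (z : HPlane n) :
    ‖a • z + b • hrotation n z‖ ^ 2 = (a ^ 2 + b ^ 2) * ‖z‖ ^ 2 := by
  simp only [norm_add_sq_real, inner_smul_left, inner_smul_right, inner_self_hrotation, norm_smul,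
    LinearIsometry.norm_map, mul_pow, Real.norm_eq_abs, sq_abs, mul_zero, add_zero]
  ring

end HorizontalPlane

section Geodesics

variable {n : ℕ} {γ : ℝ → Hpt n} {a b : ℝ}

theorem hLength_hlift (z : ℝ → HPlane n) (t : ℝ → ℝ) (a b : ℝ) :
    hLength (fun s ↦ hlift (z s) (t s)) a b = eVariationOn z (Icc a b) := by
  simp only [hLength, hproj_hlift]

theorem isHorizontal_hlift {z z' : ℝ → HPlane n} {t : ℝ → ℝ} (hab : a ≤ b)
    (hz : ∀ s, HasDerivAt z (z' s) s) (hz' : Continuous z')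
    (ht : ∀ s, HasDerivAt t (2 * ⟪z' s, hrotation n (z s)⟫) s) :
    IsHorizontal (fun s ↦ hlift (z s) (t s)) a b := by
  have hγ : ∀ s, HasDerivAt (fun s ↦ hlift (z s) (t s))
      (hlift (z' s) (2 * ⟪z' s, hrotation n (z s)⟫)) s := fun s ↦
    (hsplit n).symm.hasFDerivAt.comp_hasDerivAt s ((hz s).prodMk (ht s))
  have hz_cont : Continuous z := continuous_iff_continuousAt.2 fun s ↦ (hz s).continuousAt
  have hγ_smooth : ContDiff ℝ 1 fun s ↦ hlift (z s) (t s) := by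
    rw [contDiff_one_iff_deriv, funext fun s ↦ (hγ s).deriv]
    refine ⟨fun s ↦ (hγ s).differentiableAt, (hsplit n).symm.continuous.comp ?_⟩
    fun_prop
  refine ⟨hab, hγ_smooth.contDiffOn.exists_lipschitzOnWith one_ne_zero (convex_Icc a b)
    isCompact_Icc, _, .of_forall hγ, .of_forall fun s ↦ ?_⟩
  exact congrArg (2 * ·) (inner_hrotation (z' s) (z s))

theorem edist_hproj_le_hLength (hab : a ≤ b) :
    edist (hproj (γ a)) (hproj (γ b)) ≤ hLength γ a b :=
  eVariationOn.edist_le (fun s ↦ hproj (γ s)) (left_mem_Icc.2 hab) (right_mem_Icc.2 hab)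

theorem ofReal_sqrt_le_hLength (hγ : IsHorizontal γ a b) (hclosed : hproj (γ a) = hproj (γ b)) :
    ENNReal.ofReal √(π * ((γ b).2.2 - (γ a).2.2)) ≤ hLength γ a b := by
  obtain ⟨hab, ⟨K, hK⟩, γ', hγ', hhor⟩ := hγ
  let proj : Hpt n →L[ℝ] HPlane n :=
    (ContinuousLinearMap.fst ℝ (HPlane n) ℝ).comp (hsplit n).toContinuousLinearMap
  let height : Hpt n →L[ℝ] ℝ :=
    (ContinuousLinearMap.snd ℝ (HPlane n) ℝ).comp (hsplit n).toContinuousLinearMap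
  have hz : LipschitzOnWith (‖proj‖₊ * K) (fun s ↦ hproj (γ s)) (Icc a b) :=
    proj.lipschitz.comp_lipschitzOnWith hK
  have ht : AbsolutelyContinuousOnInterval (fun s ↦ (γ s).2.2) a b := by
    rw [← uIcc_of_le hab] at hK
    exact (height.lipschitz.comp_lipschitzOnWith hK).absolutelyContinuousOnInterval
  have hbounded : BoundedVariationOn (fun s ↦ hproj (γ s)) (Icc a b) := by
    simpa only [inter_self] using hz.locallyBoundedVariationOn a b (left_mem_Icc.2 hab)
      (right_mem_Icc.2 hab)
  refine (ENNReal.ofReal_le_iff_le_toReal hbounded).2 ?_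
  refine Real.sqrt_le_iff.2 ⟨ENNReal.toReal_nonneg, ?_⟩
  refine pi_mul_sub_le_sq_eVariationOn (J := (hrotation n).toLinearMap) hab inner_self_hrotation
    (fun z ↦ ((hrotation n).norm_map z).le) hz ht hclosed
    (hγ'.mono fun s hs ↦ proj.hasFDerivAt.comp_hasDerivAt s hs) ?_
  filter_upwards [hγ', hhor] with s hs hs_hor
  refine (height.hasFDerivAt.comp_hasDerivAt s hs).congr_deriv ?_
  exact hs_hor.trans (congrArg (2 * ·) (inner_hrotation (proj (γ' s)) (hproj (γ s))).symm)

theorem le_ccDist_iff {p q : Hpt n} {M : ℝ≥0∞} :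
    M ≤ ccDist p q ↔ ∀ (γ : ℝ → Hpt n) (a b : ℝ), IsHorizontal γ a b → γ a = p → γ b = q →
      M ≤ hLength γ a b := by
  simp only [ccDist, le_iInf_iff]

theorem edist_hproj_le_ccDist (p q : Hpt n) : edist (hproj p) (hproj q) ≤ ccDist p q := by
  rw [le_ccDist_iff]
  rintro γ a b hγ rfl rfl
  exact edist_hproj_le_hLength hγ.1

theorem ofReal_sqrt_le_ccDist {p q : Hpt n} (hpq : hproj p = hproj q) :
    ENNReal.ofReal √(π * (q.2.2 - p.2.2)) ≤ ccDist p q := by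
  rw [le_ccDist_iff]
  rintro γ a b hγ rfl rfl
  exact ofReal_sqrt_le_hLength hγ hpq

theorem isGeodesicOn_iff :
    IsGeodesicOn γ a b ↔ IsHorizontal γ a b ∧ hLength γ a b ≤ ccDist (γ a) (γ b) :=
  and_congr_right fun hγ ↦
    ⟨le_of_eq, fun h ↦ h.antisymm (le_ccDist_iff.1 le_rfl γ a b hγ rfl rfl)⟩

theorem eVariationOn_Icc_le_of_nnnorm_deriv_le {E : Type*} [NormedAddCommGroup E]
    [NormedSpace ℝ E] {f f' : ℝ → E} {K : ℝ≥0} (hf : ∀ s, HasDerivAt f (f' s) s)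
    (hf' : ∀ s, ‖f' s‖₊ ≤ K) : eVariationOn f (Icc a b) ≤ K * ENNReal.ofReal (b - a) := by
  have hLip : LipschitzOnWith K f (Icc a b) :=
    (lipschitzWith_of_nnnorm_deriv_le (fun s ↦ (hf s).differentiableAt)
      fun s ↦ (hf s).deriv ▸ hf' s).lipschitzOnWith
  simpa only [inter_self] using eVariationOn_Icc_le_of_lipschitzOnWith (s := a) (t := b) hLip

theorem isGeodesicOn_line (z₀ v : HPlane n) (t₀ : ℝ) (hab : a ≤ b) :
    IsGeodesicOn (fun s ↦ hlift (z₀ + s • v) (t₀ + 2 * (s * ⟪v, hrotation n z₀⟫))) a b := by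
  have hz : ∀ s : ℝ, HasDerivAt (fun s : ℝ ↦ z₀ + s • v) v s := fun s ↦
    (((hasDerivAt_id s).smul_const v).const_add z₀).congr_deriv (one_smul ℝ v)
  have ht : ∀ s, HasDerivAt (fun s ↦ t₀ + 2 * (s * ⟪v, hrotation n z₀⟫))
      (2 * ⟪v, hrotation n (z₀ + s • v)⟫) s := fun s ↦ by
    simpa [inner_add_right, inner_smul_right] using
      (((hasDerivAt_id s).mul_const ⟪v, hrotation n z₀⟫).const_mul 2).const_add t₀
  refine isGeodesicOn_iff.2 ⟨isHorizontal_hlift hab hz continuous_const ht, ?_⟩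
  refine le_trans ?_ (edist_hproj_le_ccDist _ _)
  rw [hLength_hlift]
  refine (eVariationOn_Icc_le_of_nnnorm_deriv_le hz fun _ ↦ le_rfl).trans_eq ?_
  rw [hproj_hlift, hproj_hlift, edist_comm, edist_add_left, edist_eq_enorm_sub, ← sub_smul,
    enorm_smul, Real.enorm_of_nonneg (sub_nonneg.2 hab), mul_comm]
  rfl

/-- The circle in `ℂⁿ` through `z₀` with centre `z₀ + w`: since `hrotation` is multiplication by
`-i`, it is `s ↦ z₀ + (1 - e^{-is}) w`. -/
def hcircle (z₀ w : HPlane n) (s : ℝ) : HPlane n :=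
  z₀ + ((1 - cos s) • w - sin s • hrotation n w)

/-- The horizontal lift to `ℍⁿ` of `hcircle z₀ w` which starts at height `t₀`. -/
def circleLift (z₀ w : HPlane n) (t₀ s : ℝ) : Hpt n :=
  hlift (hcircle z₀ w s)
    (t₀ + 2 * (s - sin s) * ‖w‖ ^ 2 + 2 * ⟪hcircle z₀ w s, hrotation n z₀⟫)

theorem hasDerivAt_hcircle (z₀ w : HPlane n) (s : ℝ) :
    HasDerivAt (hcircle z₀ w) (sin s • w + (-cos s) • hrotation n w) s := by
  refine (((((hasDerivAt_cos s).const_sub 1).smul_const w).sub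
    ((hasDerivAt_sin s).smul_const (hrotation n w))).const_add z₀).congr_deriv ?_
  rw [neg_neg, neg_smul, sub_eq_add_neg]

theorem norm_sq_hcircle_zero (w : HPlane n) (s : ℝ) :
    ‖hcircle 0 w s‖ ^ 2 = 2 * (1 - cos s) * ‖w‖ ^ 2 := by
  rw [hcircle, zero_add, sub_eq_add_neg, ← neg_smul, norm_smul_add_smul_hrotation_sq]
  linear_combination ‖w‖ ^ 2 * sin_sq_add_cos_sq s

theorem inner_deriv_hcircle_hrotation (z₀ w : HPlane n) (s : ℝ) :
    ⟪sin s • w + (-cos s) • hrotation n w, hrotation n (hcircle z₀ w s)⟫ =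
      (1 - cos s) * ‖w‖ ^ 2 + ⟪sin s • w + (-cos s) • hrotation n w, hrotation n z₀⟫ := by
  simp only [hcircle, map_add, map_sub, map_smul, hrotation_hrotation, inner_add_right,
    inner_sub_right, inner_add_left, inner_smul_left, inner_smul_right, inner_neg_right,
    inner_self_hrotation, inner_hrotation_self, LinearIsometry.inner_map_map,
    real_inner_self_eq_norm_sq, conj_trivial]
  linear_combination ‖w‖ ^ 2 * sin_sq_add_cos_sq s

theorem isHorizontal_circleLift (z₀ w : HPlane n) (t₀ : ℝ) (hab : a ≤ b) :
    IsHorizontal (circleLift z₀ w t₀) a b := by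
  refine isHorizontal_hlift hab (hasDerivAt_hcircle z₀ w) (by fun_prop) fun s ↦ ?_
  have harea := (((hasDerivAt_id s).sub (hasDerivAt_sin s)).const_mul 2).mul_const (‖w‖ ^ 2)
  have hinner := ((hasDerivAt_hcircle z₀ w s).inner ℝ
    (hasDerivAt_const s (hrotation n z₀))).const_mul 2
  refine ((harea.const_add t₀).add hinner).congr_deriv ?_
  rw [inner_deriv_hcircle_hrotation, inner_zero_right]
  ring

theorem circleLift_zero (z₀ w : HPlane n) (t₀ : ℝ) : circleLift z₀ w t₀ 0 = hlift z₀ t₀ := by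
  simp [circleLift, hcircle]

theorem circleLift_two_pi (z₀ w : HPlane n) (t₀ : ℝ) :
    circleLift z₀ w t₀ (2 * π) = hlift z₀ (t₀ + 4 * π * ‖w‖ ^ 2) := by
  simp only [circleLift, hcircle, cos_two_pi, sin_two_pi, sub_self, zero_smul, add_zero, sub_zero,
    inner_self_hrotation, mul_zero]
  ring_nf

theorem circleLift_hproj_real (x u : Fin n → ℝ) (t₀ : ℝ) :
    circleLift (hproj (x, 0, 0)) (hproj (u, 0, 0)) t₀ = fun s ↦
      (fun i ↦ x i + (1 - cos s) * u i, fun i ↦ sin s * u i,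
        t₀ + 2 * (s - sin s) * ∑ i, u i ^ 2 - 2 * sin s * ∑ i, x i * u i) := by
  ext s i
  · simp [circleLift, hcircle, hlift, hsplit, hproj, hrotation]
  · simp [circleLift, hcircle, hlift, hsplit, hproj, hrotation]
  · change t₀ + _ + 2 * ⟪_, hrotation n (hproj (x, 0, 0))⟫ = _
    have hinner : ⟪hcircle (hproj (x, 0, 0)) (hproj (u, 0, 0)) s, hrotation n (hproj (x, 0, 0))⟫ =
        -(sin s * ∑ i, x i * u i) := by
      rw [inner_hrotation]
      simp [hcircle, hproj, hrotation, Finset.mul_sum, mul_assoc, mul_comm]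
    rw [hinner, norm_sq_hproj]
    simp only [Pi.zero_apply, ne_eq, OfNat.ofNat_ne_zero, not_false_eq_true, zero_pow,
      Finset.sum_const_zero, add_zero]
    ring

theorem isGeodesicOn_circleLift (z₀ w : HPlane n) (t₀ : ℝ) :
    IsGeodesicOn (circleLift z₀ w t₀) 0 (2 * π) := by
  refine isGeodesicOn_iff.2 ⟨isHorizontal_circleLift z₀ w t₀ two_pi_pos.le, ?_⟩
  have hspeed : ∀ s, ‖sin s • w + (-cos s) • hrotation n w‖ = ‖w‖ := fun s ↦ by
    rw [← sq_eq_sq₀ (norm_nonneg _) (norm_nonneg _), norm_smul_add_smul_hrotation_sq, neg_sq,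
      sin_sq_add_cos_sq, one_mul]
  have hdist : √(π * (t₀ + 4 * π * ‖w‖ ^ 2 - t₀)) = ‖w‖ * (2 * π) := by
    rw [Real.sqrt_eq_iff_mul_self_eq (by ring_nf; positivity) (by positivity)]
    ring
  calc hLength (circleLift z₀ w t₀) 0 (2 * π)
      = eVariationOn (hcircle z₀ w) (Icc 0 (2 * π)) := hLength_hlift _ _ _ _
    _ ≤ ‖w‖₊ * ENNReal.ofReal (2 * π - 0) :=
        eVariationOn_Icc_le_of_nnnorm_deriv_le (hasDerivAt_hcircle z₀ w) fun s ↦ (hspeed s).le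
    _ = ENNReal.ofReal √(π * (t₀ + 4 * π * ‖w‖ ^ 2 - t₀)) := by
        rw [hdist, sub_zero, ENNReal.ofReal_mul (norm_nonneg w), ofReal_norm]
        rfl
    _ ≤ ccDist (circleLift z₀ w t₀ 0) (circleLift z₀ w t₀ (2 * π)) := by
        rw [circleLift_zero, circleLift_two_pi]
        exact ofReal_sqrt_le_ccDist (p := hlift z₀ t₀) (q := hlift z₀ (t₀ + 4 * π * ‖w‖ ^ 2))
          (by rw [hproj_hlift, hproj_hlift])

end Geodesics

section GeodesicHull

variable {n : ℕ}

theorem IsGeodesicOn.mem_geodJoin {γ : ℝ → Hpt n} {a b s : ℝ} {S : Set (Hpt n)}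
    (hγ : IsGeodesicOn γ a b) (ha : γ a ∈ S) (hb : γ b ∈ S) (hs : s ∈ Icc a b) :
    γ s ∈ geodJoin S :=
  ⟨γ a, ha, γ b, hb, γ, a, b, hγ, rfl, rfl, s, hs, rfl⟩

theorem exists_hcircle_zero_eq {τ : ℝ} (hτ : cos τ ≠ 1) (z : HPlane n) :
    ∃ w, hcircle 0 w τ = z := by
  have hcos : 1 - cos τ ≠ 0 := sub_ne_zero.2 hτ.symm
  refine ⟨(1 / 2 : ℝ) • z + (sin τ / (2 * (1 - cos τ))) • hrotation n z, ?_⟩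
  simp only [hcircle, zero_add, map_add, map_smul, hrotation_hrotation]
  match_scalars
  · field_simp
    linear_combination sin_sq_add_cos_sq τ
  · field_simp
    ring

variable {r τ : ℝ} {z : HPlane n}

theorem hlift_mem_Gm_one (hτ : τ ∈ Ioo 0 (2 * π)) (hz : ‖z‖ ^ 2 = 2 * (1 - cos τ) * r ^ 2) :
    hlift z (2 * (τ - sin τ) * r ^ 2) ∈ Gm {hlift 0 0, hlift 0 (4 * π * r ^ 2)} 1 := by
  have hcos : cos τ ≠ 1 := fun h ↦
    hτ.1.ne' ((cos_eq_one_iff_of_lt_of_lt (by linarith [hτ.1, pi_pos]) hτ.2).1 h)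
  obtain ⟨w, rfl⟩ := exists_hcircle_zero_eq hcos z
  have hw : ‖w‖ ^ 2 = r ^ 2 := by
    rw [norm_sq_hcircle_zero] at hz
    exact mul_left_cancel₀ (mul_ne_zero two_ne_zero (sub_ne_zero.2 hcos.symm)) hz
  have hmem := (isGeodesicOn_circleLift 0 w 0).mem_geodJoin
    (S := {hlift 0 0, hlift 0 (4 * π * r ^ 2)}) (by simp [circleLift_zero])
    (by simp [circleLift_two_pi, hw]) (Ioo_subset_Icc_self hτ)
  simp only [circleLift, hw, zero_add, map_zero, inner_zero_right, mul_zero, add_zero] at hmem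
  exact hmem

theorem hlift_mem_Gm_two (hτ : τ ∈ Ioo 0 (2 * π)) (hz₀ : z ≠ 0)
    (hz : ‖z‖ ^ 2 ≤ 2 * (1 - cos τ) * r ^ 2) :
    hlift z (2 * (τ - sin τ) * r ^ 2) ∈ Gm {hlift 0 0, hlift 0 (4 * π * r ^ 2)} 2 := by
  have hz_pos : 0 < ‖z‖ ^ 2 := by positivity
  obtain ⟨c, hc, hcz⟩ : ∃ c : ℝ, 1 ≤ c ∧ c ^ 2 * ‖z‖ ^ 2 = 2 * (1 - cos τ) * r ^ 2 := by
    have hle : 1 ≤ 2 * (1 - cos τ) * r ^ 2 / ‖z‖ ^ 2 := (one_le_div hz_pos).2 hz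
    refine ⟨√(2 * (1 - cos τ) * r ^ 2 / ‖z‖ ^ 2), Real.one_le_sqrt.2 hle, ?_⟩
    rw [Real.sq_sqrt (zero_le_one.trans hle), div_mul_cancel₀ _ hz_pos.ne']
  have hline := isGeodesicOn_line 0 z (2 * (τ - sin τ) * r ^ 2) (neg_le_self (zero_le_one.trans hc))
  simp only [map_zero, inner_zero_right, mul_zero, add_zero, zero_add] at hline
  have hsphere : ∀ d : ℝ, d ^ 2 = c ^ 2 →
      hlift (d • z) (2 * (τ - sin τ) * r ^ 2) ∈
        Gm {hlift 0 0, hlift 0 (4 * π * r ^ 2)} 1 := fun d hd ↦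
    hlift_mem_Gm_one hτ (by rw [norm_smul, mul_pow, Real.norm_eq_abs, sq_abs, hd, hcz])
  have hmem := hline.mem_geodJoin (hsphere (-c) (neg_sq c)) (hsphere c rfl) (s := 1)
    ⟨by linarith, hc⟩
  rwa [one_smul] at hmem

end GeodesicHull

theorem sum_div_sqrt_sq {n : ℕ} (hn : n ≠ 0) (c : ℝ) :
    ∑ _i : Fin n, (c / √n) ^ 2 = c ^ 2 := by
  have : (n : ℝ) ≠ 0 := Nat.cast_ne_zero.2 hn
  rw [Finset.sum_const, Finset.card_univ, Fintype.card_fin, nsmul_eq_mul, div_pow,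
    Real.sq_sqrt n.cast_nonneg, mul_div_cancel₀ _ this]

theorem stmt_11_general {n : ℕ} {r : ℝ} {z w : HPlane n} (hz₀ : z ≠ 0) (hz : ‖z‖ ^ 2 ≤ 2 * r ^ 2)
    (hw : ‖w‖ ^ 2 = r ^ 2 * ((π + 2) / (2 * π))) :
    hlift z (2 * (π / 2 - 1) * r ^ 2) ∈ Gm {hlift 0 0, hlift 0 (4 * π * r ^ 2)} 2 ∧
    hlift z (2 * (3 * π / 2 + 1) * r ^ 2) ∈ Gm {hlift 0 0, hlift 0 (4 * π * r ^ 2)} 2 ∧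
    IsGeodesicOn (circleLift z w (2 * (π / 2 - 1) * r ^ 2)) 0 (2 * π) ∧
    circleLift z w (2 * (π / 2 - 1) * r ^ 2) 0 = hlift z (2 * (π / 2 - 1) * r ^ 2) ∧
    circleLift z w (2 * (π / 2 - 1) * r ^ 2) (2 * π) =
      hlift z (2 * (3 * π / 2 + 1) * r ^ 2) := by
  have hcos : cos (3 * π / 2) = 0 := cos_eq_zero_iff.2 ⟨1, by push_cast; ring⟩
  have hsin : sin (3 * π / 2) = -1 := by
    rw [show 3 * π / 2 = π / 2 + π by ring, sin_add_pi, sin_pi_div_two]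
  refine ⟨?_, ?_, isGeodesicOn_circleLift z w _, circleLift_zero z w _, ?_⟩
  · simpa only [sin_pi_div_two] using hlift_mem_Gm_two (τ := π / 2)
      ⟨by positivity, by linarith [pi_pos]⟩ hz₀ (by rwa [cos_pi_div_two, sub_zero, mul_one])
  · simpa only [hsin, sub_neg_eq_add] using hlift_mem_Gm_two (τ := 3 * π / 2)
      ⟨by positivity, by linarith [pi_pos]⟩ hz₀ (by rwa [hcos, sub_zero, mul_one])
  · rw [circleLift_two_pi, hw]
    congr 1
    field_simp
    ring

/-- For `T₀ = 1` and `A = {(0,0,0),(0,0,1)}`, the points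
`p₂ = (R₁, 2(π/2-1)r₁²)` and `q₂ = (R₁, 2(3π/2+1)r₁²)` (in complex notation, so with zero
`y`-part) belong to `G²(A)`, and the curve
`σ₂(s) = (R₁ + (1-e^{-is})R₂, 2(π/2-1)r₁² + 2(s - sin s)r₂² - 2 sin s ⟨R₁,R₂⟩)`,
`s ∈ [0,2π]`, is a geodesic connecting `p₂` to `q₂`. -/
theorem stmt_11 (n : ℕ) (hn : 1 ≤ n)
    (r₁ r₂ : ℝ) (R₁ R₂ : Fin n → ℝ)
    (hr₁ : r₁ = 1 / (2 * Real.sqrt π))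
    (hr₂ : r₂ = r₁ * Real.sqrt ((π + 2) / (2 * π)))
    (hR₁ : R₁ = fun _ => r₁ / Real.sqrt n)
    (hR₂ : R₂ = fun _ => r₂ / Real.sqrt n)
    (p₂ q₂ : Hpt n)
    (hp₂ : p₂ = (R₁, (0 : Fin n → ℝ), 2 * (π / 2 - 1) * r₁ ^ 2))
    (hq₂ : q₂ = (R₁, (0 : Fin n → ℝ), 2 * (3 * π / 2 + 1) * r₁ ^ 2))
    (σ₂ : ℝ → Hpt n)
    (hσ₂ : σ₂ = fun s =>
      ((fun i => R₁ i + (1 - Real.cos s) * R₂ i : Fin n → ℝ),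
       (fun i => Real.sin s * R₂ i : Fin n → ℝ),
       2 * (π / 2 - 1) * r₁ ^ 2 + 2 * (s - Real.sin s) * r₂ ^ 2
         - 2 * Real.sin s * ∑ i, R₁ i * R₂ i)) :
    p₂ ∈ Gm ({((0 : Fin n → ℝ), (0 : Fin n → ℝ), (0 : ℝ)),
        ((0 : Fin n → ℝ), (0 : Fin n → ℝ), (1 : ℝ))} : Set (Hpt n)) 2 ∧
    q₂ ∈ Gm ({((0 : Fin n → ℝ), (0 : Fin n → ℝ), (0 : ℝ)),
        ((0 : Fin n → ℝ), (0 : Fin n → ℝ), (1 : ℝ))} : Set (Hpt n)) 2 ∧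
    IsGeodesicOn σ₂ 0 (2 * π) ∧ σ₂ 0 = p₂ ∧ σ₂ (2 * π) = q₂ := by
  subst hσ₂ hp₂ hq₂
  have hR₁_sq : ∑ i, R₁ i ^ 2 = r₁ ^ 2 := by rw [hR₁, sum_div_sqrt_sq (by lia)]
  have hR₂_sq : ∑ i, R₂ i ^ 2 = r₂ ^ 2 := by rw [hR₂, sum_div_sqrt_sq (by lia)]
  have hr₁_sq : 4 * π * r₁ ^ 2 = 1 := by
    rw [hr₁, div_pow, mul_pow, Real.sq_sqrt pi_nonneg]
    field_simp
    norm_num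
  have hz : ‖hproj (R₁, (0 : Fin n → ℝ), (0 : ℝ))‖ ^ 2 = r₁ ^ 2 := by simp [norm_sq_hproj, hR₁_sq]
  have hw : ‖hproj (R₂, (0 : Fin n → ℝ), (0 : ℝ))‖ ^ 2 = r₁ ^ 2 * ((π + 2) / (2 * π)) := by
    have : 0 ≤ (π + 2) / (2 * π) := by positivity
    simp [norm_sq_hproj, hR₂_sq, hr₂, mul_pow, Real.sq_sqrt this]
  have hz₀ : hproj (R₁, (0 : Fin n → ℝ), (0 : ℝ)) ≠ 0 := fun h ↦ by
    rw [h] at hz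
    simp [← hz] at hr₁_sq
  have h := stmt_11_general hz₀ (by linarith [sq_nonneg r₁]) hw
  rw [hr₁_sq, circleLift_hproj_real, hR₂_sq] at h
  exact h
end
end

section
/- Let (r_m)_{m≥1} be the sequence of positive real numbers defined by r₁ = 1/(2√π), r₂ = r₁·√((π+2)/(2π)), and, for m ≥ 3, r_m² = ((π+2)/(2π))·r_{m−1}² + (1/π)·(∑_{j=1}^{m−2} r_j)·r_{m−1}. Then for every m ≥ 3, r_m² > (1 + c)·r_{m−1}², where c = (10 − 3π)/(10π) > 0; equivalently, r_m² > ((π+2)/(2π))·r_{m−1}² + (1/5)·r_{m−1}². -/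
open Real

/-!
Put `a = (π + 2) / (2π)` and `b = 1 / π`, and let `S` be the sum of the radii before `r m`. Since
`a ≤ 1` and `b ≤ 2`, we have `r (m + 1) ^ 2 ≤ r m ^ 2 + 2 * S * r m ≤ (S + r m) ^ 2`; together with
`r 2 ≤ r 1` this says that each radius is at most the sum of all earlier ones. In particular
`r m ≤ S`, so the recursion gives `r (m + 1) ^ 2 ≥ (a + b) * r m ^ 2`, and `b > 1 / 5`.
-/

/-- The recursion of the radii `r 1, r 2, …` of the generating geodesics, with arbitrary
coefficients in place of `(π + 2) / (2π)` and `1 / π`. The sequence is indexed from `1`; `r 0` does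
not occur. -/
def RadiusRecurrence {R : Type*} [Semiring R] (a b : R) (r : ℕ → R) : Prop :=
  ∀ m, 3 ≤ m → r m ^ 2 = a * r (m - 1) ^ 2 + b * (∑ j ∈ Finset.Icc 1 (m - 2), r j) * r (m - 1)

namespace RadiusRecurrence

theorem sq_add_three {R : Type*} [Semiring R] {a b : R} {r : ℕ → R}
    (h : RadiusRecurrence a b r) (n : ℕ) :
    r (n + 3) ^ 2 = a * r (n + 2) ^ 2 + b * (∑ j ∈ Finset.Icc 1 (n + 1), r j) * r (n + 2) :=
  h (n + 3) (Nat.le_add_left 3 n)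

variable {R : Type*} [CommRing R] [LinearOrder R] [IsStrictOrderedRing R]
  {a b : R} {r : ℕ → R}

theorem le_sum_Icc (h : RadiusRecurrence a b r) (ha : a ≤ 1) (hb : b ≤ 2)
    (hr : ∀ m, 1 ≤ m → 0 ≤ r m) (hr₂ : r 2 ≤ r 1) (n : ℕ) :
    r (n + 2) ≤ ∑ j ∈ Finset.Icc 1 (n + 1), r j := by
  cases n with
  | zero => simpa using hr₂
  | succ n =>
    rw [Finset.sum_Icc_succ_top (by omega)]
    have hrec := h.sq_add_three n
    have hlast : 0 ≤ r (n + 2) := hr _ (by omega)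
    have hsum : 0 ≤ ∑ j ∈ Finset.Icc 1 (n + 1), r j :=
      Finset.sum_nonneg fun j hj => hr j (Finset.mem_Icc.mp hj).1
    set S := ∑ j ∈ Finset.Icc 1 (n + 1), r j
    refine le_of_sq_le_sq ?_ (add_nonneg hsum hlast)
    calc r (n + 3) ^ 2 = a * r (n + 2) ^ 2 + b * S * r (n + 2) := hrec
      _ ≤ 1 * r (n + 2) ^ 2 + 2 * S * r (n + 2) := by gcongr
      _ ≤ (S + r (n + 2)) ^ 2 := by linarith [sq_nonneg S, add_sq S (r (n + 2))]

theorem add_mul_sq_le_sq (h : RadiusRecurrence a b r) (ha : a ≤ 1) (hb₀ : 0 ≤ b) (hb : b ≤ 2)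
    (hr : ∀ m, 1 ≤ m → 0 ≤ r m) (hr₂ : r 2 ≤ r 1) {m : ℕ} (hm : 3 ≤ m) :
    (a + b) * r (m - 1) ^ 2 ≤ r m ^ 2 := by
  obtain ⟨n, rfl⟩ := Nat.exists_eq_add_of_le' hm
  have hlast : 0 ≤ r (n + 2) := hr _ (by omega)
  calc (a + b) * r (n + 2) ^ 2 = a * r (n + 2) ^ 2 + b * r (n + 2) * r (n + 2) := by ring
    _ ≤ a * r (n + 2) ^ 2 + b * (∑ j ∈ Finset.Icc 1 (n + 1), r j) * r (n + 2) := by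
      gcongr
      exact h.le_sum_Icc ha hb hr hr₂ n
    _ = r (n + 3) ^ 2 := (h.sq_add_three n).symm

end RadiusRecurrence

theorem pi_add_two_div_two_mul_pi_le_one : (π + 2) / (2 * π) ≤ 1 := by
  rw [div_le_one (by positivity)]
  linarith [pi_gt_three]

theorem one_div_pi_le_two : 1 / π ≤ 2 := by
  rw [div_le_iff₀ pi_pos]
  linarith [pi_gt_three]

theorem stmt_17_general (r : ℕ → ℝ) (hpos : ∀ m, 1 ≤ m → 0 < r m) (hr₂ : r 2 ≤ r 1)
    (hrec : RadiusRecurrence ((π + 2) / (2 * π)) (1 / π) r) :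
    (0 < (10 - 3 * π) / (10 * π)) ∧
    ∀ m, 3 ≤ m →
      (r m) ^ 2 > (1 + (10 - 3 * π) / (10 * π)) * (r (m - 1)) ^ 2 ∧
      (r m) ^ 2 > ((π + 2) / (2 * π)) * (r (m - 1)) ^ 2 + (1 / 5) * (r (m - 1)) ^ 2 := by
  refine ⟨div_pos (by linarith [pi_lt_d2]) (by positivity), fun m hm => ?_⟩
  have hconst : 1 + (10 - 3 * π) / (10 * π) = (π + 2) / (2 * π) + 1 / 5 := by
    field_simp
    ring
  have hfifth : 1 / 5 < 1 / π := one_div_lt_one_div_of_lt pi_pos (by linarith [pi_lt_four])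
  have hlast : 0 < r (m - 1) := hpos _ (by omega)
  rw [hconst, ← add_mul, and_self]
  calc ((π + 2) / (2 * π) + 1 / 5) * r (m - 1) ^ 2
      < ((π + 2) / (2 * π) + 1 / π) * r (m - 1) ^ 2 := by gcongr (_ + ?_) * _
    _ ≤ r m ^ 2 :=
      hrec.add_mul_sq_le_sq pi_add_two_div_two_mul_pi_le_one (by positivity) one_div_pi_le_two
        (fun k hk => (hpos k hk).le) hr₂ hm

/-- For the sequence of radii `r_m` (with `r₁ = 1/(2√π)`,
`r₂ = r₁√((π+2)/(2π))` and `r_m² = ((π+2)/(2π))r_{m-1}² + (1/π)(∑_{j=1}^{m-2} r_j)r_{m-1}`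
for `m ≥ 3`), one has `r_m² > (1 + c) r_{m-1}²` for all `m ≥ 3`, where
`c = (10 - 3π)/(10π) > 0`; equivalently `r_m² > ((π+2)/(2π))r_{m-1}² + (1/5)r_{m-1}²`. -/
theorem stmt_17 (r : ℕ → ℝ) (hpos : ∀ m, 1 ≤ m → 0 < r m)
    (h1 : r 1 = 1 / (2 * Real.sqrt π))
    (h2 : r 2 = r 1 * Real.sqrt ((π + 2) / (2 * π)))
    (hrec : ∀ m, 3 ≤ m → (r m) ^ 2 =
      ((π + 2) / (2 * π)) * (r (m - 1)) ^ 2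
        + (1 / π) * (∑ j ∈ Finset.Icc 1 (m - 2), r j) * r (m - 1)) :
    (0 < (10 - 3 * π) / (10 * π)) ∧
    ∀ m, 3 ≤ m →
      (r m) ^ 2 > (1 + (10 - 3 * π) / (10 * π)) * (r (m - 1)) ^ 2 ∧
      (r m) ^ 2 > ((π + 2) / (2 * π)) * (r (m - 1)) ^ 2 + (1 / 5) * (r (m - 1)) ^ 2 :=
  have hr₂ : r 2 ≤ r 1 := h2.trans_le <|
    mul_le_of_le_one_right (hpos 1 le_rfl).le (sqrt_le_one.mpr pi_add_two_div_two_mul_pi_le_one)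
  stmt_17_general r hpos hr₂ hrec
end

section
/- Let (r_m)_{m≥1} be the sequence of positive real numbers defined by r₁ = 1/(2√π), r₂ = r₁·√((π+2)/(2π)), and, for m ≥ 3, r_m² = ((π+2)/(2π))·r_{m−1}² + (1/π)·(∑_{j=1}^{m−2} r_j)·r_{m−1}. Then r_m² → ∞ (hence r_m → ∞) as m → ∞. -/
open Real Filter

/-!
Discarding the term in `r_{m-1}²` leaves `b S_{m-2} r_{m-1} ≤ r_m²`, where `b = 1/π` and `S_n` is
the sum of the first `n` radii. Let `d = min (r₁, r₂, b r₁)`. Since `b S_{m-2} ≥ b r₁ ≥ d`, the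
bound `r_{m-1} ≥ d` propagates to `r_m² ≥ d²`, so every radius is at least `d`. Hence `S_n ≥ n d`,
and `r_{n+2}² ≥ b d² n` tends to infinity.
-/

section OrderedSemiring

variable {K : Type*} [CommSemiring K] [LinearOrder K] [IsStrictOrderedRing K]

theorem tendsto_atTop_of_tendsto_pow_atTop {α : Type*} {l : Filter α} {f : α → K} {n : ℕ}
    (hn : n ≠ 0) (hf : ∀ᶠ x in l, 0 ≤ f x) (hpow : Tendsto (fun x => f x ^ n) l atTop) :
    Tendsto f l atTop := by
  refine tendsto_atTop.2 fun c => ?_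
  filter_upwards [hf, hpow.eventually_ge_atTop (c ^ n)] with x hx hcx
  exact le_of_pow_le_pow_left₀ hn hx hcx

variable {r : ℕ → K} {b d : K}

theorem exists_pos_forall_le_of_mul_sum_mul_le_sq (hb : 0 < b) (hpos : ∀ m, 1 ≤ m → 0 < r m)
    (hrec : ∀ n, 1 ≤ n → b * (∑ j ∈ Finset.Icc 1 n, r j) * r (n + 1) ≤ r (n + 2) ^ 2) :
    ∃ d, 0 < d ∧ ∀ m, 1 ≤ m → d ≤ r m := by
  have hr₁ := hpos 1 le_rfl
  have hr₂ := hpos 2 one_le_two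
  obtain ⟨d, hd, hd₁, hd₂, hdb⟩ : ∃ d, 0 < d ∧ d ≤ r 1 ∧ d ≤ r 2 ∧ d ≤ b * r 1 :=
    ⟨min (r 1) (min (r 2) (b * r 1)), by positivity, by simp, by simp, by simp⟩
  have le_step (n : ℕ) (hn : 1 ≤ n) (ih : d ≤ r (n + 1)) : d ≤ r (n + 2) := by
    have r₁_le_sum : r 1 ≤ ∑ j ∈ Finset.Icc 1 n, r j :=
      Finset.single_le_sum (fun j hj => (hpos j (Finset.mem_Icc.1 hj).1).le)
        (Finset.left_mem_Icc.2 hn)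
    refine le_of_pow_le_pow_left₀ two_ne_zero (hpos _ (by lia)).le ?_
    calc
      d ^ 2 = d * d := sq d
      _ ≤ b * r 1 * r (n + 1) := by gcongr
      _ ≤ b * (∑ j ∈ Finset.Icc 1 n, r j) * r (n + 1) := by gcongr; exact hd.le.trans ih
      _ ≤ r (n + 2) ^ 2 := hrec n hn
  refine ⟨d, hd, fun m hm => ?_⟩
  induction m, hm using Nat.le_induction with
  | base => exact hd₁
  | succ m hm ih =>
    obtain rfl | hm := hm.eq_or_lt
    · exact hd₂
    · obtain ⟨n, rfl⟩ := Nat.exists_eq_add_of_le' hm.le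
      exact le_step n (by lia) ih

theorem mul_sq_mul_natCast_le_sq_of_mul_sum_mul_le_sq (hb : 0 ≤ b) (hd : 0 ≤ d)
    (hle : ∀ m, 1 ≤ m → d ≤ r m) {n : ℕ}
    (hrec : b * (∑ j ∈ Finset.Icc 1 n, r j) * r (n + 1) ≤ r (n + 2) ^ 2) :
    b * d ^ 2 * n ≤ r (n + 2) ^ 2 := by
  have sum_ge : n * d ≤ ∑ j ∈ Finset.Icc 1 n, r j := by
    simpa using Finset.card_nsmul_le_sum (Finset.Icc 1 n) r d
      fun j hj => hle j (Finset.mem_Icc.1 hj).1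
  have r_ge : d ≤ r (n + 1) := hle (n + 1) (by lia)
  calc
    b * d ^ 2 * n = b * (n * d) * d := by ring
    _ ≤ b * (∑ j ∈ Finset.Icc 1 n, r j) * r (n + 1) := by
      gcongr
      exact mul_nonneg hb (sum_ge.trans' (by positivity))
    _ ≤ r (n + 2) ^ 2 := hrec

theorem stmt_18_general [Archimedean K] (hb : 0 < b) (hpos : ∀ m, 1 ≤ m → 0 < r m)
    (hrec : ∀ n, 1 ≤ n → b * (∑ j ∈ Finset.Icc 1 n, r j) * r (n + 1) ≤ r (n + 2) ^ 2) :
    Tendsto (fun m => r m ^ 2) atTop atTop ∧ Tendsto r atTop atTop := by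
  obtain ⟨d, hd, hle⟩ := exists_pos_forall_le_of_mul_sum_mul_le_sq hb hpos hrec
  have tendsto_linear : Tendsto (fun n : ℕ => b * d ^ 2 * n) atTop atTop :=
    tendsto_natCast_atTop_atTop.const_mul_atTop' (by positivity)
  have tendsto_sq : Tendsto (fun m => r m ^ 2) atTop atTop := by
    refine (tendsto_add_atTop_iff_nat 2).1 (tendsto_atTop_mono' _ ?_ tendsto_linear)
    filter_upwards [eventually_ge_atTop 1] with n hn
    exact mul_sq_mul_natCast_le_sq_of_mul_sum_mul_le_sq hb.le hd.le hle (hrec n hn)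
  refine ⟨tendsto_sq, tendsto_atTop_of_tendsto_pow_atTop two_ne_zero ?_ tendsto_sq⟩
  filter_upwards [eventually_ge_atTop 1] with m hm
  exact (hpos m hm).le

end OrderedSemiring

/-- For the sequence of radii `r_m` (with `r₁ = 1/(2√π)`,
`r₂ = r₁√((π+2)/(2π))` and `r_m² = ((π+2)/(2π))r_{m-1}² + (1/π)(∑_{j=1}^{m-2} r_j)r_{m-1}`
for `m ≥ 3`), one has `r_m² → ∞` (hence `r_m → ∞`) as `m → ∞`. -/
theorem stmt_18 (r : ℕ → ℝ) (hpos : ∀ m, 1 ≤ m → 0 < r m)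
    (h1 : r 1 = 1 / (2 * Real.sqrt π))
    (h2 : r 2 = r 1 * Real.sqrt ((π + 2) / (2 * π)))
    (hrec : ∀ m, 3 ≤ m → (r m) ^ 2 =
      ((π + 2) / (2 * π)) * (r (m - 1)) ^ 2
        + (1 / π) * (∑ j ∈ Finset.Icc 1 (m - 2), r j) * r (m - 1)) :
    Tendsto (fun m => (r m) ^ 2) atTop atTop ∧ Tendsto r atTop atTop := by
  exact stmt_18_general (b := 1 / π) (by positivity) hpos fun n hn =>
    (le_add_of_nonneg_left (by positivity)).trans_eq (hrec (n + 2) (by lia)).symm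
end

section
/- Let (r_m)_{m≥1} be the sequence of positive real numbers defined by r₁ = 1/(2√π), r₂ = r₁·√((π+2)/(2π)), and, for m ≥ 3, r_m² = ((π+2)/(2π))·r_{m−1}² + (1/π)·(∑_{j=1}^{m−2} r_j)·r_{m−1}. Then for every m ≥ 4, 25·(∑_{j=1}^{m−2} r_j)² > π²·r_{m−1}²; equivalently, 5·(r₁ + r₂ + … + r_{m−2}) > π·r_{m−1}. -/
open Real

/-!
Put `S = r₁ + ⋯ + r_{m-3}` and `x = r_{m-2}`. The recurrence makes `π² r_{m-1}²` a combination of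
`x²` and `S x`, while the sum to be compared with `r_{m-1}` is `S + x`, and
`25 (S + x)² ≥ 25 x² + 50 S x`. The inequality thus holds coefficient by coefficient, as
`π (π + 2) / 2 < 25` and `π ≤ 50`.
-/

section OrderedRing

variable {R : Type*} [CommRing R] [LinearOrder R] [IsStrictOrderedRing R] {a b c d : R}

lemma sq_mul_sq_lt_sq_mul_add_sq {s x y : R} (hs : 0 ≤ s) (hx : 0 < x)
    (ha : c ^ 2 * a < d ^ 2) (hb : c ^ 2 * b ≤ 2 * d ^ 2)
    (hy : y ^ 2 ≤ a * x ^ 2 + b * s * x) :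
    c ^ 2 * y ^ 2 < d ^ 2 * (s + x) ^ 2 :=
  calc
    c ^ 2 * y ^ 2 ≤ c ^ 2 * (a * x ^ 2 + b * s * x) := by gcongr
    _ = c ^ 2 * a * x ^ 2 + c ^ 2 * b * (s * x) := by ring
    _ < d ^ 2 * x ^ 2 + 2 * d ^ 2 * (s * x) :=
      add_lt_add_of_lt_of_le (mul_lt_mul_of_pos_right ha (by positivity))
        (mul_le_mul_of_nonneg_right hb (by positivity))
    _ ≤ d ^ 2 * x ^ 2 + 2 * d ^ 2 * (s * x) + d ^ 2 * s ^ 2 :=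
      le_add_of_nonneg_right (by positivity)
    _ = d ^ 2 * (s + x) ^ 2 := by ring

theorem stmt_19_general {r : ℕ → R} (hpos : ∀ m, 1 ≤ m → 0 < r m) (hd : 0 ≤ d)
    (ha : c ^ 2 * a < d ^ 2) (hb : c ^ 2 * b ≤ 2 * d ^ 2)
    (hrec : ∀ m, 3 ≤ m → r m ^ 2 ≤
      a * r (m - 1) ^ 2 + b * (∑ j ∈ Finset.Icc 1 (m - 2), r j) * r (m - 1)) :
    ∀ m, 4 ≤ m →
      d ^ 2 * (∑ j ∈ Finset.Icc 1 (m - 2), r j) ^ 2 > c ^ 2 * r (m - 1) ^ 2 ∧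
      d * (∑ j ∈ Finset.Icc 1 (m - 2), r j) > c * r (m - 1) := by
  intro m hm
  obtain ⟨n, rfl⟩ := Nat.exists_eq_add_of_le' hm
  change d ^ 2 * (∑ j ∈ Finset.Icc 1 (n + 2), r j) ^ 2 > c ^ 2 * r (n + 3) ^ 2 ∧
    d * (∑ j ∈ Finset.Icc 1 (n + 2), r j) > c * r (n + 3)
  have partialSum_nonneg (k : ℕ) : 0 ≤ ∑ j ∈ Finset.Icc 1 k, r j :=
    Finset.sum_nonneg fun j hj ↦ (hpos j (Finset.mem_Icc.1 hj).1).le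
  have sq_lt : c ^ 2 * r (n + 3) ^ 2 < d ^ 2 * (∑ j ∈ Finset.Icc 1 (n + 2), r j) ^ 2 := by
    rw [Finset.sum_Icc_succ_top (by omega)]
    exact sq_mul_sq_lt_sq_mul_add_sq (partialSum_nonneg _) (hpos _ (by omega)) ha hb
      (hrec (n + 3) (by omega))
  refine ⟨sq_lt, lt_of_pow_lt_pow_left₀ 2 (mul_nonneg hd (partialSum_nonneg _)) ?_⟩
  simpa only [mul_pow] using sq_lt

end OrderedRing

lemma pi_sq_mul_pi_add_two_div_two_mul_pi_lt : π ^ 2 * ((π + 2) / (2 * π)) < 5 ^ 2 :=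
  calc
    π ^ 2 * ((π + 2) / (2 * π)) = π * (π + 2) / 2 := by field_simp
    _ < 4 * (4 + 2) / 2 := by gcongr <;> exact pi_lt_four
    _ < 5 ^ 2 := by norm_num

lemma pi_sq_mul_one_div_pi_le : π ^ 2 * (1 / π) ≤ 2 * 5 ^ 2 :=
  calc
    π ^ 2 * (1 / π) = π := by field_simp
    _ ≤ 4 := pi_le_four
    _ ≤ 2 * 5 ^ 2 := by norm_num

/-- For the sequence of radii `r_m` (with `r₁ = 1/(2√π)`,
`r₂ = r₁√((π+2)/(2π))` and `r_m² = ((π+2)/(2π))r_{m-1}² + (1/π)(∑_{j=1}^{m-2} r_j)r_{m-1}`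
for `m ≥ 3`), one has `25(∑_{j=1}^{m-2} r_j)² > π² r_{m-1}²`, equivalently
`5(r₁ + … + r_{m-2}) > π r_{m-1}`, for all `m ≥ 4`. -/
theorem stmt_19 (r : ℕ → ℝ) (hpos : ∀ m, 1 ≤ m → 0 < r m)
    (h1 : r 1 = 1 / (2 * Real.sqrt π))
    (h2 : r 2 = r 1 * Real.sqrt ((π + 2) / (2 * π)))
    (hrec : ∀ m, 3 ≤ m → (r m) ^ 2 =
      ((π + 2) / (2 * π)) * (r (m - 1)) ^ 2
        + (1 / π) * (∑ j ∈ Finset.Icc 1 (m - 2), r j) * r (m - 1)) :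
    ∀ m, 4 ≤ m →
      25 * (∑ j ∈ Finset.Icc 1 (m - 2), r j) ^ 2 > π ^ 2 * (r (m - 1)) ^ 2 ∧
      5 * (∑ j ∈ Finset.Icc 1 (m - 2), r j) > π * r (m - 1) := by
  rw [show (25 : ℝ) = 5 ^ 2 by norm_num]
  exact stmt_19_general hpos (by norm_num) pi_sq_mul_pi_add_two_div_two_mul_pi_lt
    pi_sq_mul_one_div_pi_le fun m hm ↦ (hrec m hm).le
end
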